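/- Let k be the algebraic closure of the finite field F_p, let χ : kˣ → kˣ be a group homomorphism (character), and let V be a k-vector space with kˣ acting on χ ⊗ V via χ. Then the group cohomology H^i(kˣ, χ ⊗ V) equals V if i = 0 and χ is the trivial character, and vanishes in all other cases (i.e., for i ≥ 1 or χ nontrivial). -/

import Mathlib

/-- The representation of `kˣ` on a `k`-vector space `V` where `g` acts by scalar
multiplication by `χ(g)`; this is the representation `χ ⊗ V`. -/
noncomputable def charRep (k : Type) [Field k] (V : Type) [AddCommGroup V] [Module k V]
    (χ : kˣ →* kˣ) : Representation k kˣ V :=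
  ((algebraMap k (Module.End k V)).toMonoidHom).comp ((Units.coeHom k).comp χ)

section helpers

open Finset

lemma contract_snoc_lt {G : Type*} [Mul G] {n : ℕ} (x : Fin (n + 1) → G) (h : G) (j : Fin n) :
    Fin.contractNth j.castSucc.castSucc (· * ·) (Fin.snoc x h : Fin (n + 2) → G)
      = (Fin.snoc (Fin.contractNth j.castSucc (· * ·) x) h : Fin (n + 1) → G) := by
  funext i
  refine Fin.lastCases ?_ (fun i => ?_) i
  · rw [Fin.contractNth_apply_of_gt _ _ _ _ (by simp)]
    rw [Fin.succ_last, Fin.snoc_last, Fin.snoc_last]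
  · simp only [Fin.contractNth, Fin.snoc_castSucc, Fin.val_castSucc, Fin.succ_castSucc]

lemma contract_snoc_mid {G : Type*} [Mul G] {n : ℕ} (x : Fin (n + 1) → G) (h : G) :
    Fin.contractNth (Fin.last n).castSucc (· * ·) (Fin.snoc x h : Fin (n + 2) → G)
      = (Fin.snoc (fun i : Fin n => x i.castSucc) (x (Fin.last n) * h) : Fin (n + 1) → G) := by
  funext i
  refine Fin.lastCases ?_ (fun i => ?_) i
  · rw [Fin.contractNth_apply_of_eq _ _ _ _ (by simp)]
    rw [Fin.succ_last, Fin.snoc_last, Fin.snoc_last, Fin.snoc_castSucc]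
  · rw [Fin.contractNth_apply_of_lt _ _ _ _ (by simp), Fin.snoc_castSucc, Fin.snoc_castSucc]

lemma contract_last {G : Type*} [Mul G] {n : ℕ} (x : Fin (n + 1) → G) :
    Fin.contractNth (Fin.last n) (· * ·) x = fun i : Fin n => x i.castSucc := by
  funext i
  rw [Fin.contractNth_apply_of_lt _ _ _ _ (by simp)]

/-- Inhomogeneous differential with scalar action. -/
def dd {k G V : Type*} [Field k] [Group G] [AddCommGroup V] [Module k V] (a : G → k) (n : ℕ)
    (f : (Fin n → G) → V) (x : Fin (n + 1) → G) : V :=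
  a (x 0) • f (fun i => x i.succ) + ∑ j : Fin (n + 1),
    (-1 : k) ^ ((j : ℕ) + 1) • f (Fin.contractNth j (· * ·) x)

variable {k G V : Type*} [Field k] [Group G] [AddCommGroup V] [Module k V]

lemma avg_eq (a : G → k) (n : ℕ) (f : (Fin (n + 1) → G) → V) (hf : ∀ x, dd a (n + 1) f x = 0)
    (H : Subgroup G) [Fintype H] (x : Fin (n + 1) → G) (hx : x (Fin.last n) ∈ H) :
    dd a n (fun y => ∑ h : H, f (Fin.snoc y (h : G) : Fin (n + 1) → G)) x
      = (-1 : k) ^ (n + 1) • (Fintype.card H : k) • f x := by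
  have key : ∑ h : H, dd a (n + 1) f (Fin.snoc x (h : G) : Fin (n + 2) → G) = 0 := by simp [hf]
  have e0 : ∀ h : G, (Fin.snoc x h : Fin (n + 2) → G) 0 = x 0 := fun h => by
    rw [← Fin.castSucc_zero, Fin.snoc_castSucc]
  have e1 : ∀ h : G, (fun i : Fin (n + 1) => (Fin.snoc x h : Fin (n + 2) → G) i.succ)
      = (Fin.snoc (fun i : Fin n => x i.succ) h : Fin (n + 1) → G) := fun h => by
    funext i
    refine Fin.lastCases ?_ (fun i => ?_) i
    · rw [Fin.succ_last, Fin.snoc_last, Fin.snoc_last]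
    · rw [Fin.succ_castSucc, Fin.snoc_castSucc, Fin.snoc_castSucc]
  have e2 : ∑ h : H, f (Fin.snoc (fun i : Fin n => x i.castSucc) (x (Fin.last n) * h) :
      Fin (n + 1) → G) = ∑ h : H, f (Fin.snoc (fun i : Fin n => x i.castSucc) (h : G)) :=
    Fintype.sum_equiv (Equiv.mulLeft (⟨x (Fin.last n), hx⟩ : H)) _ _ (fun h => rfl)
  simp only [dd, e0, e1, Fin.sum_univ_castSucc (n := n + 1), Fin.sum_univ_castSucc (n := n),
    contract_snoc_lt, contract_snoc_mid, contract_last, Fin.snoc_castSucc, Fin.val_castSucc,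
    Fin.val_last, sum_add_distrib, ← smul_sum, e2] at key ⊢
  rw [sum_comm] at key
  simp only [← smul_sum, sum_const, card_univ] at key
  rw [← sub_eq_zero, ← key, ← Nat.cast_smul_eq_nsmul k]
  rw [pow_succ _ (n + 1)]
  module

/-- Coefficients of the differential. -/
noncomputable def DD (a : G → k) (n : ℕ) (x : Fin (n + 1) → G) : (Fin n → G) →₀ k :=
  dd a n (fun y => Finsupp.single y (1 : k)) x

lemma DD_apply (a : G → k) (n : ℕ) (g : (Fin n → G) → V) (x : Fin (n + 1) → G) :
    Finsupp.linearCombination k g (DD a n x) = dd a n g x := by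
  simp [DD, dd, map_sum]

lemma exists_factor {k U W V : Type*} [Field k] [AddCommGroup U] [Module k U] [AddCommGroup W]
    [Module k W] [AddCommGroup V] [Module k V] (L : U →ₗ[k] W) (F : U →ₗ[k] V)
    (hker : LinearMap.ker L ≤ LinearMap.ker F) : ∃ E : W →ₗ[k] V, ∀ c, E (L c) = F c := by
  obtain ⟨s, hs⟩ := LinearMap.exists_rightInverse_of_surjective L.rangeRestrict
    (LinearMap.range_eq_top.2 L.surjective_rangeRestrict)
  obtain ⟨E, hE⟩ := LinearMap.exists_extend (F ∘ₗ s)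
  refine ⟨E, fun c => ?_⟩
  have h3 : E (L c) = F (s (L.rangeRestrict c)) := DFunLike.congr_fun hE (L.rangeRestrict c)
  have h4 : s (L.rangeRestrict c) - c ∈ LinearMap.ker L := by
    have := congrArg Subtype.val (DFunLike.congr_fun hs (L.rangeRestrict c))
    rw [LinearMap.mem_ker, map_sub, sub_eq_zero]
    exact this
  have h5 := hker h4
  rw [LinearMap.mem_ker, map_sub, sub_eq_zero] at h5
  rw [h3, h5]

lemma exists_primitive (a : G → k) (n : ℕ) (f : (Fin (n + 1) → G) → V)
    (hf : ∀ x, dd a (n + 1) f x = 0)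
    (hG : ∀ s : Set G, s.Finite → ∃ H : Subgroup G, s ⊆ H ∧ Finite H ∧ (Nat.card H : k) ≠ 0) :
    ∃ g : (Fin n → G) → V, ∀ x, dd a n g x = f x := by
  let L := Finsupp.linearCombination k (DD a n)
  let F := Finsupp.linearCombination k f
  have hker : LinearMap.ker L ≤ LinearMap.ker F := by
    intro c hc
    rw [LinearMap.mem_ker] at hc ⊢
    obtain ⟨H, hs, hfin, hcard⟩ := hG ((fun x : Fin (n + 1) → G => x (Fin.last n)) '' c.support)
      (c.support.finite_toSet.image _)
    have := Fintype.ofFinite H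
    rw [Nat.card_eq_fintype_card] at hcard
    let g : (Fin n → G) → V := fun y => ∑ h : H, f (Fin.snoc y (h : G) : Fin (n + 1) → G)
    have h1 : Finsupp.linearCombination k g (L c)
        = (-1 : k) ^ (n + 1) • (Fintype.card H : k) • F c := by
      simp only [L, F]
      rw [Finsupp.linearCombination_apply k (v := DD a n), Finsupp.linearCombination_apply k (v := f),
        Finsupp.sum, Finsupp.sum, map_sum, smul_sum, smul_sum]
      refine sum_congr rfl fun x hx => ?_
      rw [map_smul, DD_apply, avg_eq a n f hf H x (hs ⟨x, hx, rfl⟩)]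
      module
    rw [hc, map_zero, eq_comm, smul_eq_zero, smul_eq_zero] at h1
    rcases h1 with h1 | h1 | h1
    · exact absurd h1 (pow_ne_zero _ (by simp))
    · exact absurd h1 hcard
    · exact h1
  obtain ⟨E, h2⟩ := exists_factor L F hker
  refine ⟨fun y => E (Finsupp.single y 1), fun x => ?_⟩
  have h6 := h2 (Finsupp.single x 1)
  simp only [L, F, Finsupp.linearCombination_single, one_smul] at h6
  rw [← h6]
  simp only [DD, dd, map_sum, map_add, map_smul]

end helpers

lemma units_finite_subgroup (p : ℕ) [Fact p.Prime] (s : Set (AlgebraicClosure (ZMod p))ˣ)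
    (hs : s.Finite) : ∃ H : Subgroup (AlgebraicClosure (ZMod p))ˣ, s ⊆ H ∧ Finite H ∧
      (Nat.card H : AlgebraicClosure (ZMod p)) ≠ 0 := by
  have tors : ∀ x : (AlgebraicClosure (ZMod p))ˣ, IsOfFinOrder x := by
    intro x
    have hx : IsIntegral (ZMod p) (x : AlgebraicClosure (ZMod p)) :=
      Algebra.IsIntegral.isIntegral _
    have := IntermediateField.adjoin.finiteDimensional hx
    have : Finite (IntermediateField.adjoin (ZMod p) {(x : AlgebraicClosure (ZMod p))}) :=
      Module.finite_of_finite (ZMod p)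
    let y : IntermediateField.adjoin (ZMod p) {(x : AlgebraicClosure (ZMod p))} :=
      ⟨x, IntermediateField.mem_adjoin_simple_self _ _⟩
    have hy : y ≠ 0 := fun h => x.ne_zero (congrArg Subtype.val h)
    obtain ⟨m, hm, h⟩ := (isOfFinOrder_iff_pow_eq_one).1 (isOfFinOrder_of_finite (Units.mk0 y hy))
    refine isOfFinOrder_iff_pow_eq_one.2 ⟨m, hm, Units.ext ?_⟩
    have := congrArg (fun u => ((Units.val u :
      IntermediateField.adjoin (ZMod p) {(x : AlgebraicClosure (ZMod p))}) :
      AlgebraicClosure (ZMod p))) h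
    simpa [y] using this
  have hfin : Finite (Subgroup.closure s) := by
    have := hs.to_subtype
    have : Group.FG (Subgroup.closure s) := Group.closure_finite_fg s
    exact CommGroup.finite_of_fg_isMulTorsion _
      (fun x => Submonoid.isOfFinOrder_coe.1 (tors x))
  refine ⟨Subgroup.closure s, Subgroup.subset_closure, hfin, fun h0 => ?_⟩
  have : CharP (AlgebraicClosure (ZMod p)) p := inferInstance
  have hdvd := (CharP.cast_eq_zero_iff (AlgebraicClosure (ZMod p)) p _).1 h0
  obtain ⟨x, hx⟩ := exists_prime_orderOf_dvd_card' p hdvd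
  have h1 : ((x : (AlgebraicClosure (ZMod p))ˣ) : AlgebraicClosure (ZMod p)) ^ p = 1 := by
    have := pow_orderOf_eq_one x
    rw [hx] at this
    have h := congrArg (fun u : Subgroup.closure s =>
      (((u : (AlgebraicClosure (ZMod p))ˣ)) : AlgebraicClosure (ZMod p))) this
    simpa using h
  have h2 : (((x : (AlgebraicClosure (ZMod p))ˣ) : AlgebraicClosure (ZMod p)) - 1) ^ p = 0 := by
    rw [sub_pow_char, h1, one_pow, sub_self]
  have h3 := sub_eq_zero.1 (pow_eq_zero_iff (Fact.out : p.Prime).ne_zero |>.1 h2)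
  have h4 : x = 1 := Subtype.ext (Units.ext h3)
  rw [h4, orderOf_one] at hx
  exact (Fact.out : p.Prime).one_lt.ne hx

/-- Let `k = F̄_p`, `χ : kˣ → kˣ` a character and `V` a `k`-vector space with `kˣ` acting
via `χ`.  Then `H^i(kˣ, χ ⊗ V)` equals `V` when `i = 0` and `χ` is trivial, and vanishes
in all other cases (`i ≥ 1` or `χ` nontrivial). -/
theorem stmt_1 (p : ℕ) [Fact p.Prime]
    (V : Type) [AddCommGroup V] [Module (AlgebraicClosure (ZMod p)) V]
    (χ : (AlgebraicClosure (ZMod p))ˣ →* (AlgebraicClosure (ZMod p))ˣ) :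
    (χ = 1 → Nonempty
      ((groupCohomology (Rep.of (charRep (AlgebraicClosure (ZMod p)) V χ)) 0)
        ≃ₗ[AlgebraicClosure (ZMod p)] V)) ∧
    (∀ i : ℕ, (1 ≤ i ∨ χ ≠ 1) →
      Subsingleton (groupCohomology (Rep.of (charRep (AlgebraicClosure (ZMod p)) V χ)) i)) := by
  have hρ : ∀ g v, charRep (AlgebraicClosure (ZMod p)) V χ g v
      = ((χ g : (AlgebraicClosure (ZMod p))ˣ) : AlgebraicClosure (ZMod p)) • v := fun g v => rfl
  refine ⟨fun h => ?_, fun i hi => ?_⟩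
  · have htop : (charRep (AlgebraicClosure (ZMod p)) V χ).invariants = ⊤ := by
      rw [eq_top_iff]
      intro v _ g
      rw [hρ, h]
      simp
    exact ⟨(groupCohomology.H0Iso
      (Rep.of (charRep (AlgebraicClosure (ZMod p)) V χ))).toLinearEquiv.trans
        (LinearEquiv.ofTop _ htop)⟩
  · rcases i with _ | n
    · have hχ : χ ≠ 1 := by simpa using hi
      obtain ⟨g, hg⟩ : ∃ g, χ g ≠ 1 := by
        by_contra hcon
        push Not at hcon
        exact hχ (MonoidHom.ext hcon)
      have hbot : Subsingleton (charRep (AlgebraicClosure (ZMod p)) V χ).invariants := by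
        refine subsingleton_of_forall_eq 0 fun v => Subtype.ext ?_
        have h1 := v.2 g
        rw [hρ] at h1
        have h2 : (((χ g : (AlgebraicClosure (ZMod p))ˣ) : AlgebraicClosure (ZMod p)) - 1) •
            (v : V) = 0 := by rw [sub_smul, one_smul, h1, sub_self]
        rcases smul_eq_zero.1 h2 with h3 | h3
        · exact absurd (Units.ext (sub_eq_zero.1 h3)) hg
        · exact h3
      exact (groupCohomology.H0Iso
        (Rep.of (charRep (AlgebraicClosure (ZMod p)) V χ))).toLinearEquiv.toEquiv.subsingleton
    · set A := Rep.of (charRep (AlgebraicClosure (ZMod p)) V χ) with hA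
      have hd : ∀ (m : ℕ) (f : (Fin m → (AlgebraicClosure (ZMod p))ˣ) → V),
          (inhomogeneousCochains.d A m) f = dd (fun g => ((χ g : (AlgebraicClosure (ZMod p))ˣ) :
            AlgebraicClosure (ZMod p))) m f := fun m f => rfl
      have hex : (groupCohomology.inhomogeneousCochains A).ExactAt (n + 1) := by
        rw [HomologicalComplex.exactAt_iff' _ n (n + 1) (n + 2) (by simp) (by simp),
          CategoryTheory.ShortComplex.moduleCat_exact_iff]
        intro f hf
        change (groupCohomology.inhomogeneousCochains A).d (n + 1) (n + 1 + 1) f = 0 at hf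
        rw [groupCohomology.inhomogeneousCochains.d_def] at hf
        obtain ⟨g, hg⟩ := exists_primitive (V := V) (fun g => ((χ g : (AlgebraicClosure (ZMod p))ˣ) :
            AlgebraicClosure (ZMod p))) n f (fun x => congrFun hf x) (units_finite_subgroup p)
        refine ⟨g, ?_⟩
        change (groupCohomology.inhomogeneousCochains A).d n (n + 1) g = f
        rw [groupCohomology.inhomogeneousCochains.d_def]
        exact funext hg
      exact ModuleCat.subsingleton_of_isZero hex.isZero_homology
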